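/- arXiv:2205.01747 — 2 statements merged into one kernel-verified Lean document; each statement's English description precedes it below -/
import Mathlib

section
/- Let n ≥ 1, let A ⊆ R⁻(A_n) be FFLV-admissible, let 1 ≤ k ≤ n, and fix any total order on A. In Λ^k(ℂ^{n+1}) set V_A(ω_k) := span_ℂ{ f_{a₁,b₁} ∘ ⋯ ∘ f_{a_r,b_r} (v_{ω_k}) : r ≥ 0, each −α_{a_t,b_t} ∈ A }. Then the set of vectors { (∏_{−α_{a,b} ∈ A} f_{a,b}^{s_{a,b}})(v_{ω_k}) : s ∈ S_A(ω_k) }, with the factors in the product taken in the fixed total order, is a ℂ-basis of V_A(ω_k). -/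
/-!
Write `e_T` for the standard basis vector indexed by `T`.  Each root vector sends `e_T` to `0` or
to `± e_{T'}`, so everything reduces to tracking subsets.

A multi-exponent in `S_A(ω_k)` is the indicator of an antichain: a finite set `P ⊆ A` of roots
`(a, b)` with `a ≤ k ≤ b` that are pairwise strictly nested (`mem_face_iff`; two comparable roots
lie on a common hook-shaped Dyck path).  The corresponding monomial sends `v_{ω_k}` to `± e_T`,
where `T` is obtained from `{1, …, k}` by removing all the `a` and adding all the `b + 1`
(`applyMono_eq`).  A nested set is determined by its set of `a`'s and its set of `b`'s
(`nested_unique`), so distinct exponents give distinct basis vectors up to sign; this is linear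
independence.

For spanning, a weaker notion is convenient: a matching is a set `P ⊆ A` of such roots with
pairwise distinct `a`'s and pairwise distinct `b`'s.  Replacing a crossing pair of `P` by its join
stays inside `A` by admissibility, keeps `T`, and lowers `∑ a * b`; hence every matching has the
same `T` as some nested set (`exists_nested`).  Finally the vectors `e_T` with `T` coming from a
matching are stable, up to scalars, under `f_{a,b}` for `(a,b) ∈ A` (`fRoot_stable`): if
`a ≤ k ≤ b` the pair `(a,b)` is added to `P`, and otherwise it is concatenated with the pair of `P`
ending in `a` or starting at `b + 1`, the sum of the two roots being in `A`.
-/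

/-!
STATEMENT 17.  The lattice points `S_A(ω_k)` of the face `P_A(ω_k)` of the FFLV polytope
parametrize a monomial basis of the submodule `V_A(ω_k) ⊆ Λ^k(ℂ^{n+1})` for
FFLV-admissible `A ⊆ R⁻(A_n)`.

Negative roots of `A_n` are encoded as pairs `(a,b)` (standing for `−α_{a,b}`).
The exterior power `Λ^k(ℂ^{n+1})` is modelled via its standard basis: vectors are
functions `Finset ℕ → ℂ`, the indicator of a subset `S ⊆ {1, …, n+1}` representing the
increasing wedge of the `e_s`, `s ∈ S`; the matrix unit `E_{p,q}` acts as a derivation,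
replacing the letter `e_q` by `e_p` with the appropriate Koszul sign; the root vector
`f_{a,b}` is the action of `E_{b+1,a}`, and `v_{ω_k} = e₁ ∧ ⋯ ∧ e_k`.
-/

/-- `(i,j)` encodes a negative root `−α_{i,j} ∈ R⁻` of type `A_n`. -/
def InRnegA (n : ℕ) (r : ℕ × ℕ) : Prop := 1 ≤ r.1 ∧ r.1 ≤ r.2 ∧ r.2 ≤ n

/-- The order `≽` on `R⁻`: `−α_{i,j} ≽ −α_{k,ℓ}` iff `i ≤ k` and `j ≤ ℓ`. -/
def GeA (r s : ℕ × ℕ) : Prop := r.1 ≤ s.1 ∧ r.2 ≤ s.2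

/-- Nonzero components of pairs of the join `β₁ ⊕ β₂`, for `β₁ = −α_{i₁,i₂}`,
`β₂ = −α_{j₁,j₂}` with `i₁ ≤ j₁`. -/
def JoinNZ (b₁ b₂ : ℕ × ℕ) : Set (ℕ × ℕ) :=
  {r | (b₁.1 < b₂.1 ∧ b₂.1 ≤ b₁.2 + 1 ∧ b₁.2 < b₂.2) ∧
       (r = (b₁.1, b₂.2) ∨ (b₂.1 ≤ b₁.2 ∧ r = (b₂.1, b₁.2)))}

/-- `A ⊆ R⁻` is FFLV-admissible. -/
def AdmissibleA (n : ℕ) (A : Set (ℕ × ℕ)) : Prop :=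
  (∀ r ∈ A, InRnegA n r) ∧
  (∀ r ∈ A, ∀ s ∈ A, r.2 + 1 = s.1 → (r.1, s.2) ∈ A) ∧
  (∀ r ∈ A, ∀ s ∈ A, GeA r s → JoinNZ r s ⊆ A)

/-- A type `A` Dyck path of length `len`, with start `s(p) = (p 0).1` and end
`e(p) = (p (len−1)).1`. -/
def IsDyckA (n len : ℕ) (p : ℕ → ℕ × ℕ) : Prop :=
  1 ≤ len ∧ (∀ t, t < len → InRnegA n (p t)) ∧
  (p 0).1 = (p 0).2 ∧ (p (len - 1)).1 = (p (len - 1)).2 ∧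
  (∀ t, t + 1 < len → GeA (p t) (p (t + 1)) ∧ p t ≠ p (t + 1))

/-- The lattice points `S_A(ω_k)` of the face `P_A(ω_k)` of the FFLV polytope:
multi-exponents `s : R⁻ → ℤ_{≥0}` supported on `A` with `Σ_{β ∈ p} s_β ≤ 1` for Dyck
paths `p` with `s(p) ≤ k ≤ e(p)` and `Σ_{β ∈ p} s_β ≤ 0` for all other Dyck paths. -/
def SFaceFund (n k : ℕ) (A : Set (ℕ × ℕ)) : Set ((ℕ × ℕ) → ℕ) :=
  {s | (∀ r, r ∉ A → s r = 0) ∧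
    ∀ len (p : ℕ → ℕ × ℕ), IsDyckA n len p →
      ∑ t ∈ Finset.range len, s (p t) ≤
        (if (p 0).1 ≤ k ∧ k ≤ (p (len - 1)).1 then 1 else 0)}

/-- Action of the matrix unit `E_{p,q}` on `Λ^•(ℂ^{n+1})` in the standard basis. -/
noncomputable def matE (p q : ℕ) (x : Finset ℕ → ℂ) : Finset ℕ → ℂ := fun T =>
  if p = q then (if q ∈ T then x T else 0)
  else if p ∈ T ∧ q ∉ T then
    (-1 : ℂ) ^ (((T.erase p).filter (fun s => min p q < s ∧ s < max p q)).card) *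
      x (insert q (T.erase p))
  else 0

/-- The root vector `f_{a,b}` (action of `E_{b+1,a}`) applied to the pair `r = (a,b)`. -/
noncomputable def fRoot (r : ℕ × ℕ) : (Finset ℕ → ℂ) → (Finset ℕ → ℂ) := matE (r.2 + 1) r.1

/-- The highest weight vector `v_{ω_k} = e₁ ∧ ⋯ ∧ e_k`. -/
noncomputable def hwVec (k : ℕ) : Finset ℕ → ℂ := fun T => if T = Finset.Icc 1 k then 1 else 0

/-- The monomial `∏_{−α_{a,b} ∈ A} f_{a,b}^{s_{a,b}}` applied to a vector, the factors
taken in the order given by the list `L`. -/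
noncomputable def applyMono (L : List (ℕ × ℕ)) (s : (ℕ × ℕ) → ℕ) (x : Finset ℕ → ℂ) :
    Finset ℕ → ℂ :=
  L.foldr (fun r w => (fRoot r)^[s r] w) x

/-- The submodule `V_A(ω_k) = U(𝔫_A⁻) · v_{ω_k}`: the span of all vectors obtained from
`v_{ω_k}` by applying finitely many root vectors `f_{a,b}` with `−α_{a,b} ∈ A`. -/
noncomputable def VA (k : ℕ) (A : Set (ℕ × ℕ)) : Submodule ℂ (Finset ℕ → ℂ) :=
  Submodule.span ℂ
    {v | ∃ L : List (ℕ × ℕ), (∀ r ∈ L, r ∈ A) ∧ v = L.foldr (fun r w => fRoot r w) (hwVec k)}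

/-! ### Root vectors on standard basis vectors -/

/-- The standard basis vector `e_T`. -/
noncomputable def eVec (T : Finset ℕ) : Finset ℕ → ℂ := Pi.single T 1

lemma hwVec_eq (k : ℕ) : hwVec k = eVec (Finset.Icc 1 k) := by
  funext T
  simp [hwVec, eVec, Pi.single_apply]

lemma fRoot_smul (r : ℕ × ℕ) (c : ℂ) (x : Finset ℕ → ℂ) : fRoot r (c • x) = c • fRoot r x := by
  funext T
  simp only [fRoot, matE, Pi.smul_apply, smul_eq_mul]
  split_ifs <;> ring

lemma fRoot_eVec_of_mem {r : ℕ × ℕ} {T : Finset ℕ} (h : r.1 ∈ T) (h' : r.2 + 1 ∉ T) :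
    ∃ c : ℂ, c ≠ 0 ∧ fRoot r (eVec T) = c • eVec (insert (r.2 + 1) (T.erase r.1)) := by
  have hne : r.2 + 1 ≠ r.1 := fun e => h' (e ▸ h)
  refine ⟨(-1 : ℂ) ^ ((((insert (r.2 + 1) (T.erase r.1)).erase (r.2 + 1)).filter
    (fun s => min (r.2 + 1) r.1 < s ∧ s < max (r.2 + 1) r.1)).card), by simp, ?_⟩
  funext S
  simp only [fRoot, matE, Pi.smul_apply, smul_eq_mul, eVec, Pi.single_apply, if_neg hne]
  by_cases hS : S = insert (r.2 + 1) (T.erase r.1)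
  · subst hS
    have e1 : insert r.1 ((insert (r.2 + 1) (T.erase r.1)).erase (r.2 + 1)) = T := by
      ext x; simp; grind
    have e2 : r.2 + 1 ∈ insert (r.2 + 1) (T.erase r.1) ∧
        r.1 ∉ insert (r.2 + 1) (T.erase r.1) := by
      simp [hne.symm]
    rw [if_pos e2, e1]
    simp
  · rw [if_neg hS]
    split_ifs with h1 h2
    · exfalso
      apply hS
      rw [← h2]
      ext x
      simp
      grind
    · simp
    · simp

lemma fRoot_eVec_of_not {r : ℕ × ℕ} {T : Finset ℕ} (hne : r.2 + 1 ≠ r.1)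
    (h : ¬ (r.1 ∈ T ∧ r.2 + 1 ∉ T)) : fRoot r (eVec T) = 0 := by
  funext S
  simp only [fRoot, matE, eVec, Pi.single_apply, if_neg hne, Pi.zero_apply]
  split_ifs with h1 h2
  · exfalso
    apply h
    rw [← h2]
    simp [hne]
  · simp
  · rfl

/-! ### Matchings and nested sets of roots -/

/-- A matching: a finite subset of `A` consisting of roots `(a,b)` with `a ≤ k ≤ b`, no two of
which share an `a` or a `b`. -/
def IsMatch (k : ℕ) (A : Set (ℕ × ℕ)) (P : Finset (ℕ × ℕ)) : Prop :=
  (∀ r ∈ P, r ∈ A ∧ r.1 ≤ k ∧ k ≤ r.2) ∧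
  ∀ r ∈ P, ∀ s ∈ P, r ≠ s → r.1 ≠ s.1 ∧ r.2 ≠ s.2

/-- The roots in `P` are pairwise strictly nested, i.e. an antichain for `≽`. -/
def IsNested (P : Finset (ℕ × ℕ)) : Prop :=
  ∀ r ∈ P, ∀ s ∈ P, r ≠ s → (r.1 < s.1 ∧ s.2 < r.2) ∨ (s.1 < r.1 ∧ r.2 < s.2)

/-- The subset `{1, …, k}` with every `a` removed and every `b + 1` added, `(a,b) ∈ P`. -/
def target (k : ℕ) (P : Finset (ℕ × ℕ)) : Finset ℕ :=
  (Finset.Icc 1 k \ P.image Prod.fst) ∪ P.image (fun r => r.2 + 1)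

lemma mem_target {k : ℕ} {P : Finset (ℕ × ℕ)} {x : ℕ} :
    x ∈ target k P ↔ ((1 ≤ x ∧ x ≤ k) ∧ ∀ r ∈ P, r.1 ≠ x) ∨ ∃ r ∈ P, r.2 + 1 = x := by
  simp only [target, Finset.mem_union, Finset.mem_sdiff, Finset.mem_Icc, Finset.mem_image, ne_eq,
    not_exists, not_and]

/-- Uncrossing: every matching in an admissible set can be replaced by a nested one with the same
target. -/
lemma exists_nested {n k : ℕ} {A : Set (ℕ × ℕ)} (hA : AdmissibleA n A) :
    ∀ (N : ℕ) (P : Finset (ℕ × ℕ)), IsMatch k A P → ∑ r ∈ P, r.1 * r.2 = N →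
      ∃ Q, IsMatch k A Q ∧ IsNested Q ∧ target k Q = target k P := by
  intro N
  induction N using Nat.strong_induction_on with
  | _ N ih =>
  intro P hP hN
  by_cases hnest : IsNested P
  · exact ⟨P, hP, hnest, rfl⟩
  obtain ⟨⟨a, b⟩, hr, ⟨c, d⟩, hs, hac, hbd⟩ : ∃ r ∈ P, ∃ s ∈ P, r.1 < s.1 ∧ r.2 < s.2 := by
    simp only [IsNested, not_forall] at hnest
    obtain ⟨r, hr, s, hs, hne, hx⟩ := hnest
    have := hP.2 r hr s hs hne
    rcases lt_or_gt_of_ne this.1 with h | h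
    · exact ⟨r, hr, s, hs, h, by omega⟩
    · exact ⟨s, hs, r, hr, h, by omega⟩
  simp only at hac hbd
  obtain ⟨hrA, hak, hkb⟩ := hP.1 _ hr
  obtain ⟨hsA, hck, hkd⟩ := hP.1 _ hs
  simp only at hak hkb hck hkd
  have hj := hA.2.2 _ hrA _ hsA ⟨hac.le, hbd.le⟩
  have h1 : (a, d) ∈ A := hj ⟨⟨hac, by simp only; omega, hbd⟩, Or.inl rfl⟩
  have h2 : (c, b) ∈ A := hj ⟨⟨hac, by simp only; omega, hbd⟩, Or.inr ⟨by simp only; omega, rfl⟩⟩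
  have hadP : (a, d) ∉ P := fun h => (hP.2 _ h _ hr (by simp; omega)).1 rfl
  have hcbP : (c, b) ∉ P := fun h => (hP.2 _ h _ hs (by simp; omega)).1 rfl
  set R := (P.erase (a, b)).erase (c, d) with hR
  have hPR : P = insert (a, b) (insert (c, d) R) := by
    ext x; simp only [hR, Finset.mem_insert, Finset.mem_erase]; grind
  have hRP : ∀ x ∈ R, x ∈ P ∧ x ≠ (a, b) ∧ x ≠ (c, d) := by
    intro x hx; simp only [hR, Finset.mem_erase] at hx; tauto
  have hR1 : ∀ x ∈ R, x.1 ≠ a ∧ x.2 ≠ b ∧ x.1 ≠ c ∧ x.2 ≠ d := by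
    intro x hx
    obtain ⟨hx, hx1, hx2⟩ := hRP x hx
    exact ⟨(hP.2 _ hx _ hr hx1).1, (hP.2 _ hx _ hr hx1).2, (hP.2 _ hx _ hs hx2).1,
      (hP.2 _ hx _ hs hx2).2⟩
  have hQ : IsMatch k A (insert (a, d) (insert (c, b) R)) := by
    constructor
    · intro x hx
      simp only [Finset.mem_insert] at hx
      rcases hx with rfl | rfl | hx
      · exact ⟨h1, hak, hkd⟩
      · exact ⟨h2, hck, hkb⟩
      · exact hP.1 x (hRP x hx).1
    · intro x hx y hy hxy
      simp only [Finset.mem_insert] at hx hy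
      rcases hx with rfl | rfl | hx <;> rcases hy with rfl | rfl | hy
      · exact absurd rfl hxy
      · simp only; omega
      · have := hR1 y hy; simp only; omega
      · simp only; omega
      · exact absurd rfl hxy
      · have := hR1 y hy; simp only; omega
      · have := hR1 x hx; simp only; omega
      · have := hR1 x hx; simp only; omega
      · exact hP.2 x (hRP x hx).1 y (hRP y hy).1 hxy
  have hlt : ∑ r ∈ insert (a, d) (insert (c, b) R), r.1 * r.2 < N := by
    have e1 : (a, b) ∉ insert (c, d) R := by
      simp only [Finset.mem_insert, not_or, Prod.mk.injEq]
      exact ⟨by omega, fun h => (hR1 _ h).1 rfl⟩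
    have e2 : (c, d) ∉ R := fun h => (hR1 _ h).2.2.1 rfl
    have e3 : (a, d) ∉ insert (c, b) R := by
      simp only [Finset.mem_insert, not_or, Prod.mk.injEq]
      exact ⟨by omega, fun h => (hR1 _ h).1 rfl⟩
    have e4 : (c, b) ∉ R := fun h => (hR1 _ h).2.2.1 rfl
    rw [← hN, hPR, Finset.sum_insert e1, Finset.sum_insert e2, Finset.sum_insert e3,
      Finset.sum_insert e4]
    -- the rearrangement inequality for `a < c`, `b < d`
    obtain ⟨u, rfl⟩ := Nat.exists_eq_add_of_lt hac
    obtain ⟨v, rfl⟩ := Nat.exists_eq_add_of_lt hbd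
    simp only
    nlinarith [Nat.zero_le (u * v)]
  obtain ⟨Q, hQ1, hQ2, hQ3⟩ := ih _ hlt _ hQ rfl
  refine ⟨Q, hQ1, hQ2, hQ3.trans ?_⟩
  rw [hPR]
  ext x
  simp only [mem_target, Finset.forall_mem_insert, Finset.exists_mem_insert]
  tauto

lemma image_fst_eq {k : ℕ} {A : Set (ℕ × ℕ)} {P : Finset (ℕ × ℕ)} (hA : ∀ r ∈ A, 1 ≤ r.1)
    (hP : IsMatch k A P) : P.image Prod.fst = Finset.Icc 1 k \ target k P := by
  ext x
  simp only [Finset.mem_image, Finset.mem_sdiff, Finset.mem_Icc, mem_target]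
  constructor
  · rintro ⟨r, hr, rfl⟩
    have h1 := hP.1 r hr
    refine ⟨⟨hA r h1.1, h1.2.1⟩, ?_⟩
    rintro (⟨-, h⟩ | ⟨s, hs, h⟩)
    · exact h r hr rfl
    · have := hP.1 s hs
      omega
  · rintro ⟨h1, h2⟩
    by_contra hc
    exact h2 (Or.inl ⟨h1, fun r hr e => hc ⟨r, hr, e⟩⟩)

lemma mem_image_snd {k : ℕ} {A : Set (ℕ × ℕ)} {P : Finset (ℕ × ℕ)}
    (hP : IsMatch k A P) (y : ℕ) : y ∈ P.image Prod.snd ↔ k ≤ y ∧ y + 1 ∈ target k P := by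
  simp only [Finset.mem_image, mem_target]
  constructor
  · rintro ⟨r, hr, rfl⟩
    exact ⟨(hP.1 r hr).2.2, Or.inr ⟨r, hr, rfl⟩⟩
  · rintro ⟨h1, ⟨h2, -⟩ | ⟨r, hr, h⟩⟩
    · omega
    · exact ⟨r, hr, by omega⟩

/-- In a nested set, `(a,b)` has as many roots starting left of `a` as roots ending right of `b`. -/
lemma nested_card {k : ℕ} {A : Set (ℕ × ℕ)} {P : Finset (ℕ × ℕ)}
    (hP : IsMatch k A P) (hN : IsNested P) {r : ℕ × ℕ} (hr : r ∈ P) :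
    ((P.image Prod.fst).filter (· < r.1)).card = ((P.image Prod.snd).filter (r.2 < ·)).card := by
  rw [Finset.filter_image, Finset.filter_image, Finset.card_image_of_injOn,
    Finset.card_image_of_injOn]
  · congr 1
    ext x
    simp only [Finset.mem_filter]
    refine and_congr_right fun hx => ?_
    by_cases hxr : x = r
    · subst hxr; simp
    · have := hN x hx r hr hxr
      omega
  · intro x hx y hy h
    simp only [Finset.coe_filter, Set.mem_ofPred_eq] at hx hy
    by_contra hc
    exact (hP.2 x hx.1 y hy.1 hc).2 h
  · intro x hx y hy h
    simp only [Finset.coe_filter, Set.mem_ofPred_eq] at hx hy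
    by_contra hc
    exact (hP.2 x hx.1 y hy.1 hc).1 h

lemma nested_subset {k : ℕ} {A : Set (ℕ × ℕ)} (hA : ∀ r ∈ A, 1 ≤ r.1) {P Q : Finset (ℕ × ℕ)}
    (hP : IsMatch k A P) (hPN : IsNested P) (hQ : IsMatch k A Q) (hQN : IsNested Q)
    (h : target k P = target k Q) : P ⊆ Q := by
  have hF : P.image Prod.fst = Q.image Prod.fst := by
    rw [image_fst_eq hA hP, image_fst_eq hA hQ, h]
  have hG : P.image Prod.snd = Q.image Prod.snd := by
    ext y
    rw [mem_image_snd hP, mem_image_snd hQ, h]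
  intro r hr
  obtain ⟨q, hq, hqr⟩ := Finset.mem_image.1 (hF ▸ Finset.mem_image_of_mem Prod.fst hr)
  have h1 := nested_card hP hPN hr
  have h2 := nested_card hQ hQN hq
  rw [hF, hG, ← hqr, h2] at h1
  have hrG : r.2 ∈ Q.image Prod.snd := hG ▸ Finset.mem_image_of_mem Prod.snd hr
  have hqG : q.2 ∈ Q.image Prod.snd := Finset.mem_image_of_mem Prod.snd hq
  -- a member of a finite set of naturals is determined by how many members exceed it
  have key : ∀ x y : ℕ, y ∈ Q.image Prod.snd → x < y →
      ((Q.image Prod.snd).filter (y < ·)).card < ((Q.image Prod.snd).filter (x < ·)).card := by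
    intro x y hy hxy
    apply Finset.card_lt_card
    rw [Finset.ssubset_iff_of_subset]
    · exact ⟨y, Finset.mem_filter.2 ⟨hy, hxy⟩, by simp⟩
    · intro z hz
      rw [Finset.mem_filter] at hz ⊢
      exact ⟨hz.1, hxy.trans hz.2⟩
  have h2 : q.2 = r.2 := by
    rcases lt_trichotomy q.2 r.2 with h' | h' | h'
    · have := key _ _ hrG h'; omega
    · exact h'
    · have := key _ _ hqG h'; omega
  rwa [← Prod.ext hqr h2]

lemma nested_unique {k : ℕ} {A : Set (ℕ × ℕ)} (hA : ∀ r ∈ A, 1 ≤ r.1) {P Q : Finset (ℕ × ℕ)}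
    (hP : IsMatch k A P) (hPN : IsNested P) (hQ : IsMatch k A Q) (hQN : IsNested Q)
    (h : target k P = target k Q) : P = Q :=
  (nested_subset hA hP hPN hQ hQN h).antisymm (nested_subset hA hQ hQN hP hPN h.symm)

/-! ### Stability under the root vectors of `A` -/

lemma IsMatch.mono {k : ℕ} {A : Set (ℕ × ℕ)} {P Q : Finset (ℕ × ℕ)} (hP : IsMatch k A P)
    (h : Q ⊆ P) : IsMatch k A Q :=
  ⟨fun r hr => hP.1 r (h hr), fun r hr s hs => hP.2 r (h hr) s (h hs)⟩

lemma IsMatch.insert {k : ℕ} {A : Set (ℕ × ℕ)} {P : Finset (ℕ × ℕ)} (hP : IsMatch k A P)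
    {r : ℕ × ℕ} (hr : r ∈ A) (h1 : r.1 ≤ k) (h2 : k ≤ r.2)
    (h : ∀ s ∈ P, s.1 ≠ r.1 ∧ s.2 ≠ r.2) : IsMatch k A (insert r P) := by
  constructor
  · intro x hx
    rcases Finset.mem_insert.1 hx with rfl | hx
    · exact ⟨hr, h1, h2⟩
    · exact hP.1 x hx
  · intro x hx y hy hxy
    rcases Finset.mem_insert.1 hx with hx' | hx' <;> rcases Finset.mem_insert.1 hy with hy' | hy'
    · exact absurd (hx'.trans hy'.symm) hxy
    · rw [hx']
      exact ⟨(h y hy').1.symm, (h y hy').2.symm⟩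
    · rw [hy']
      exact h x hx'
    · exact hP.2 x hx' y hy' hxy

lemma target_insert {k : ℕ} {A : Set (ℕ × ℕ)} {P : Finset (ℕ × ℕ)} (hP : IsMatch k A P)
    {r : ℕ × ℕ} (h1 : r.1 ≤ k) :
    target k (insert r P) = insert (r.2 + 1) ((target k P).erase r.1) := by
  ext x
  simp only [Finset.mem_insert, Finset.mem_erase, mem_target, Finset.forall_mem_insert,
    Finset.exists_mem_insert]
  have : ∀ s ∈ P, s.2 + 1 ≠ r.1 := fun s hs => by have := hP.1 s hs; omega
  grind

/-- The underlying set operation of `fRoot_stable`. -/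
lemma target_stable {n k : ℕ} {A : Set (ℕ × ℕ)} (hA : AdmissibleA n A) {P : Finset (ℕ × ℕ)}
    (hP : IsMatch k A P) {r : ℕ × ℕ} (hr : r ∈ A) (h1 : r.1 ∈ target k P)
    (h2 : r.2 + 1 ∉ target k P) :
    ∃ Q, IsMatch k A Q ∧ target k Q = insert (r.2 + 1) ((target k P).erase r.1) := by
  obtain ⟨hr1, hr2, hr3⟩ := hA.1 r hr
  obtain ⟨a, b⟩ := r
  simp only at hr1 hr2 hr3 h1 h2 ⊢
  have h1' := mem_target.1 h1
  have h2' : ¬ (_ ∨ _) := fun h => h2 (mem_target.2 h)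
  rw [not_or] at h2'
  obtain ⟨h2a, h2b⟩ := h2'
  have hsnd : ∀ s ∈ P, s.2 ≠ b := fun s hs e => h2b ⟨s, hs, by rw [e]⟩
  have hlow : ∀ s ∈ P, s.1 ≤ k ∧ k ≤ s.2 := fun s hs => (hP.1 s hs).2
  by_cases hak : a ≤ k
  · have hfst : ∀ s ∈ P, s.1 ≠ a := by
      rcases h1' with ⟨-, h⟩ | ⟨s, hs, h⟩
      · exact h
      · have := hlow s hs; omega
    by_cases hkb : k ≤ b
    · exact ⟨insert (a, b) P, hP.insert hr hak hkb fun s hs => ⟨hfst s hs, hsnd s hs⟩,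
        target_insert hP hak⟩
    · -- `b + 1` was removed by some `(b + 1, d) ∈ P`, to be replaced by `(a, d)`
      obtain ⟨⟨c, d⟩, hs, hc⟩ : ∃ s ∈ P, s.1 = b + 1 := by
        by_contra hc
        exact h2a ⟨⟨by omega, by omega⟩, fun s hs e => hc ⟨s, hs, e⟩⟩
      simp only at hc
      subst hc
      have had : (a, d) ∈ A := hA.2.1 _ hr _ (hP.1 _ hs).1 rfl
      have hkd := (hlow _ hs).2
      have hne : ∀ s ∈ P.erase (b + 1, d), s.1 ≠ b + 1 ∧ s.2 ≠ d := fun s h =>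
        hP.2 s (Finset.mem_of_mem_erase h) _ hs (Finset.ne_of_mem_erase h)
      have hM := hP.mono (Finset.erase_subset (b + 1, d) P)
      refine ⟨insert (a, d) (P.erase (b + 1, d)), hM.insert had hak hkd fun s hs =>
        ⟨hfst s (Finset.mem_of_mem_erase hs), (hne s hs).2⟩, ?_⟩
      have hPe : P = insert (b + 1, d) (P.erase (b + 1, d)) := (Finset.insert_erase hs).symm
      have e1 : target k P = _ := (congrArg (target k) hPe).trans
        (target_insert hM (r := (b + 1, d)) (by simp only; omega))
      rw [target_insert hM (r := (a, d)) hak, e1]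
      have hb : b + 1 ∈ target k (P.erase (b + 1, d)) :=
        mem_target.2 (Or.inl ⟨⟨by omega, by omega⟩, fun s hs => (hne s hs).1⟩)
      ext x
      simp only [Finset.mem_insert, Finset.mem_erase]
      simp only at hkd
      grind
  · -- `a = d + 1` was added by some `(c, d) ∈ P`, to be replaced by `(c, b)`
    obtain ⟨⟨c, d⟩, hs, hc⟩ : ∃ s ∈ P, s.2 + 1 = a := by
      rcases h1' with ⟨h, -⟩ | h
      · omega
      · exact h
    simp only at hc
    subst hc
    have hcb : (c, b) ∈ A := hA.2.1 _ (hP.1 _ hs).1 _ hr rfl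
    have hcd := hlow _ hs
    simp only at hcd
    have hne : ∀ s ∈ P.erase (c, d), s.1 ≠ c ∧ s.2 ≠ d := fun s h =>
      hP.2 s (Finset.mem_of_mem_erase h) _ hs (Finset.ne_of_mem_erase h)
    have hM := hP.mono (Finset.erase_subset (c, d) P)
    refine ⟨insert (c, b) (P.erase (c, d)), hM.insert hcb hcd.1 (by simp only; omega) fun s hs =>
      ⟨(hne s hs).1, hsnd s (Finset.mem_of_mem_erase hs)⟩, ?_⟩
    have hPe : P = insert (c, d) (P.erase (c, d)) := (Finset.insert_erase hs).symm
    have e1 : target k P = _ := (congrArg (target k) hPe).trans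
      (target_insert hM (r := (c, d)) hcd.1)
    rw [target_insert hM (r := (c, b)) hcd.1, e1]
    have hd : d + 1 ∉ target k (P.erase (c, d)) := by
      rw [mem_target]
      rintro (⟨h, -⟩ | ⟨s, hs, h⟩)
      · omega
      · have := (hne s hs).2
        omega
    ext x
    simp only [Finset.mem_insert, Finset.mem_erase]
    grind

lemma fRoot_stable {n k : ℕ} {A : Set (ℕ × ℕ)} (hA : AdmissibleA n A) {P : Finset (ℕ × ℕ)}
    (hP : IsMatch k A P) {r : ℕ × ℕ} (hr : r ∈ A) :
    ∃ (c : ℂ) (Q : Finset (ℕ × ℕ)), IsMatch k A Q ∧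
      fRoot r (eVec (target k P)) = c • eVec (target k Q) := by
  by_cases h : r.1 ∈ target k P ∧ r.2 + 1 ∉ target k P
  · obtain ⟨c, -, hc⟩ := fRoot_eVec_of_mem h.1 h.2
    obtain ⟨Q, hQ, hQT⟩ := target_stable hA hP hr h.1 h.2
    exact ⟨c, Q, hQ, by rw [hc, hQT]⟩
  · obtain ⟨-, h2, -⟩ := hA.1 r hr
    exact ⟨0, P, hP, by rw [fRoot_eVec_of_not (by omega) h, zero_smul]⟩

lemma target_empty (k : ℕ) : target k ∅ = Finset.Icc 1 k := by
  ext x; simp [mem_target]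

lemma isMatch_empty (k : ℕ) (A : Set (ℕ × ℕ)) : IsMatch k A ∅ := by
  simp [IsMatch]

/-- Every vector in the generating set of `VA k A` is a multiple of the basis vector of a
matching. -/
lemma foldr_fRoot {n k : ℕ} {A : Set (ℕ × ℕ)} (hA : AdmissibleA n A) (L : List (ℕ × ℕ))
    (hL : ∀ r ∈ L, r ∈ A) :
    ∃ (c : ℂ) (Q : Finset (ℕ × ℕ)), IsMatch k A Q ∧
      L.foldr (fun r w => fRoot r w) (hwVec k) = c • eVec (target k Q) := by
  induction L with
  | nil => exact ⟨1, ∅, isMatch_empty k A, by simp [hwVec_eq, target_empty]⟩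
  | cons r L ih =>
    obtain ⟨c, Q, hQ, h⟩ := ih fun s hs => hL s (List.mem_cons_of_mem _ hs)
    obtain ⟨c', Q', hQ', h'⟩ := fRoot_stable hA hQ (hL r List.mem_cons_self)
    exact ⟨c * c', Q', hQ', by rw [List.foldr_cons, h, fRoot_smul, h', smul_smul]⟩

/-! ### Monomials of matchings -/

/-- The indicator multi-exponent of a set of roots. -/
def ind (P : Finset (ℕ × ℕ)) (r : ℕ × ℕ) : ℕ := if r ∈ P then 1 else 0

lemma applyMono_filter {n k : ℕ} {A : Set (ℕ × ℕ)} (hA : AdmissibleA n A) {P : Finset (ℕ × ℕ)}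
    (hP : IsMatch k A P) (L : List (ℕ × ℕ)) (hL : L.Nodup) :
    ∃ c : ℂ, c ≠ 0 ∧
      applyMono L (ind P) (hwVec k) = c • eVec (target k (P.filter (· ∈ L))) := by
  induction L with
  | nil => exact ⟨1, one_ne_zero, by simp [applyMono, hwVec_eq, target_empty]⟩
  | cons r L ih =>
    obtain ⟨hrL, hL⟩ := List.nodup_cons.1 hL
    obtain ⟨c, hc, h⟩ := ih hL
    have hstep : applyMono (r :: L) (ind P) (hwVec k) =
        (fRoot r)^[ind P r] (applyMono L (ind P) (hwVec k)) := rfl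
    by_cases hr : r ∈ P
    · have hM := hP.mono (Finset.filter_subset (· ∈ L) P)
      have hne : ∀ s ∈ P.filter (· ∈ L), s.1 ≠ r.1 ∧ s.2 ≠ r.2 := by
        intro s hs
        rw [Finset.mem_filter] at hs
        exact hP.2 s hs.1 r hr (fun e => hrL (e ▸ hs.2))
      obtain ⟨hrA, h1, h2⟩ := hP.1 r hr
      have hm : r.1 ∈ target k (P.filter (· ∈ L)) :=
        mem_target.2 (Or.inl ⟨⟨(hA.1 r hrA).1, h1⟩, fun s hs => (hne s hs).1⟩)
      have hn : r.2 + 1 ∉ target k (P.filter (· ∈ L)) := by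
        rw [mem_target]
        rintro (⟨h, -⟩ | ⟨s, hs, h⟩)
        · omega
        · have := (hne s hs).2
          omega
      obtain ⟨c', hc', h'⟩ := fRoot_eVec_of_mem hm hn
      have hset : P.filter (· ∈ r :: L) = insert r (P.filter (· ∈ L)) := by
        ext x; simp only [Finset.mem_filter, Finset.mem_insert, List.mem_cons]; grind
      refine ⟨c * c', mul_ne_zero hc hc', ?_⟩
      rw [hstep, h, ind, if_pos hr, Function.iterate_one, fRoot_smul, h', smul_smul, hset,
        target_insert hM h1]
    · have hset : P.filter (· ∈ r :: L) = P.filter (· ∈ L) := by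
        ext x; simp only [Finset.mem_filter, List.mem_cons]; grind
      refine ⟨c, hc, ?_⟩
      rw [hstep, h, ind, if_neg hr, Function.iterate_zero, id, hset]

lemma applyMono_eq {n k : ℕ} {A : Set (ℕ × ℕ)} (hA : AdmissibleA n A) {P : Finset (ℕ × ℕ)}
    (hP : IsMatch k A P) (L : List (ℕ × ℕ)) (hnd : L.Nodup) (hL : ∀ r, r ∈ L ↔ r ∈ A) :
    ∃ c : ℂ, c ≠ 0 ∧ applyMono L (ind P) (hwVec k) = c • eVec (target k P) := by
  have := applyMono_filter hA hP L hnd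
  rwa [Finset.filter_true_of_mem fun r hr => (hL r).2 (hP.1 r hr).1] at this

/-! ### Lattice points of the face as nested sets -/

/-- The hook-shaped path `(a,a), …, (a,d), …, (d,d)`; it meets every `(a,b)` and `(c,d)` with
`a ≤ b, c ≤ d`. -/
def hook (a d t : ℕ) : ℕ × ℕ := (a + (t - (d - a)), min (a + t) d)

lemma hook_dyck {n a d : ℕ} (ha : 1 ≤ a) (had : a ≤ d) (hd : d ≤ n) :
    IsDyckA n (2 * (d - a) + 1) (hook a d) := by
  refine ⟨by omega, fun t ht => ?_, ?_, ?_, fun t ht => ⟨?_, ?_⟩⟩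
  · simp only [InRnegA, hook]; omega
  · simp only [hook]; omega
  · simp only [hook]; omega
  · simp only [GeA, hook]; omega
  · simp only [hook, ne_eq, Prod.mk.injEq]; omega

lemma hook_sum_le {n k a d : ℕ} {A : Set (ℕ × ℕ)} {s : ℕ × ℕ → ℕ} (hs : s ∈ SFaceFund n k A)
    (ha : 1 ≤ a) (had : a ≤ d) (hd : d ≤ n) :
    ∑ t ∈ Finset.range (2 * (d - a) + 1), s (hook a d t) ≤ if a ≤ k ∧ k ≤ d then 1 else 0 := by
  have h := hs.2 _ _ (hook_dyck ha had hd)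
  have e1 : (hook a d 0).1 = a := by simp [hook]
  have e2 : (hook a d (2 * (d - a) + 1 - 1)).1 = d := by simp only [hook]; omega
  rwa [e1, e2] at h

lemma face_single {n k : ℕ} {A : Set (ℕ × ℕ)} {s : ℕ × ℕ → ℕ} (hs : s ∈ SFaceFund n k A)
    {r : ℕ × ℕ} (hr : InRnegA n r) : s r ≤ if r.1 ≤ k ∧ k ≤ r.2 then 1 else 0 := by
  obtain ⟨h1, h2, h3⟩ := hr
  refine le_trans ?_ (hook_sum_le hs h1 h2 h3)
  have e : hook r.1 r.2 (r.2 - r.1) = r := by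
    ext <;> simp only [hook] <;> omega
  have := Finset.single_le_sum (f := fun t => s (hook r.1 r.2 t)) (fun _ _ => Nat.zero_le _)
    (Finset.mem_range.2 (show r.2 - r.1 < 2 * (r.2 - r.1) + 1 by omega))
  simpa only [e] using this

lemma face_pair {n k : ℕ} {A : Set (ℕ × ℕ)} {s : ℕ × ℕ → ℕ} (hs : s ∈ SFaceFund n k A)
    {r r' : ℕ × ℕ} (hr : InRnegA n r) (hr' : InRnegA n r') (hne : r ≠ r') (hge : GeA r r') :
    s r + s r' ≤ 1 := by
  obtain ⟨a, b⟩ := r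
  obtain ⟨c, d⟩ := r'
  obtain ⟨h1, h2, h3⟩ := hr
  obtain ⟨h1', h2', h3'⟩ := hr'
  obtain ⟨hac, hbd⟩ := hge
  simp only [ne_eq, Prod.mk.injEq] at *
  have h := hook_sum_le hs h1 (show a ≤ d by omega) h3'
  have hle : (if a ≤ k ∧ k ≤ d then 1 else 0) ≤ 1 := by split_ifs <;> simp
  refine le_trans ?_ (h.trans hle)
  have e1 : hook a d (b - a) = (a, b) := by
    ext <;> simp only [hook] <;> omega
  have e2 : hook a d ((d - a) + (c - a)) = (c, d) := by
    ext <;> simp only [hook] <;> omega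
  have hsub : ({b - a, (d - a) + (c - a)} : Finset ℕ) ⊆ Finset.range (2 * (d - a) + 1) := by
    intro x hx
    simp only [Finset.mem_insert, Finset.mem_singleton] at hx
    rw [Finset.mem_range]
    omega
  have := Finset.sum_le_sum_of_subset (f := fun t => s (hook a d t)) hsub
  rw [Finset.sum_pair (by omega)] at this
  simpa only [e1, e2] using this

/-- Along a Dyck path both coordinates are weakly increasing and their sum is strictly
increasing. -/
lemma dyck_mono {n len : ℕ} {p : ℕ → ℕ × ℕ} (hp : IsDyckA n len p) {t : ℕ} :
    ∀ u, t + u < len → GeA (p t) (p (t + u)) ∧ (p t).1 + (p t).2 + u ≤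
      (p (t + u)).1 + (p (t + u)).2 := by
  intro u
  induction u with
  | zero => intro _; simp [GeA]
  | succ u ih =>
    intro h
    obtain ⟨⟨h1, h2⟩, h3⟩ := ih (by omega)
    obtain ⟨⟨h4, h5⟩, h6⟩ := hp.2.2.2.2 (t + u) (by omega)
    rw [← add_assoc]
    have h7 : (p (t + u)).1 ≠ (p (t + u + 1)).1 ∨ (p (t + u)).2 ≠ (p (t + u + 1)).2 := by
      by_contra hc
      push Not at hc
      exact h6 (Prod.ext hc.1 hc.2)
    refine ⟨⟨by omega, by omega⟩, by omega⟩

lemma ind_mem_face {n k : ℕ} {A : Set (ℕ × ℕ)} {P : Finset (ℕ × ℕ)}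
    (hP : IsMatch k A P) (hN : IsNested P) : ind P ∈ SFaceFund n k A := by
  refine ⟨fun r hr => if_neg fun h => hr (hP.1 r h).1, fun len p hp => ?_⟩
  have hcard : ∑ t ∈ Finset.range len, ind P (p t) =
      ((Finset.range len).filter (fun t => p t ∈ P)).card := by
    simp only [ind, Finset.card_filter]
  rw [hcard]
  split_ifs with hk
  · rw [Finset.card_le_one]
    have key : ∀ t t', t < t' → t' < len → p t ∈ P → p t' ∈ P → False := by
      intro t t' h1 h2 h3 h4
      obtain ⟨u, rfl⟩ := Nat.exists_eq_add_of_lt h1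
      obtain ⟨⟨h5, h6⟩, h7⟩ := dyck_mono hp (u + 1) (show t + (u + 1) < len by omega)
      rw [← add_assoc t] at h5 h6 h7
      have := hN _ h3 _ h4 (fun e => by rw [← e] at h7; omega)
      omega
    intro t ht t' ht'
    rw [Finset.mem_filter, Finset.mem_range] at ht ht'
    rcases lt_trichotomy t t' with h | h | h
    · exact (key t t' h ht'.1 ht.2 ht'.2).elim
    · exact h
    · exact (key t' t h ht.1 ht'.2 ht.2).elim
  · rw [Nat.le_zero, Finset.card_eq_zero, Finset.filter_eq_empty_iff]
    intro t ht h
    rw [Finset.mem_range] at ht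
    apply hk
    have h1 := (dyck_mono hp (t := 0) t (by omega)).1
    have h2 := (dyck_mono hp (t := t) (len - 1 - t) (by omega)).1
    rw [show t + (len - 1 - t) = len - 1 by omega] at h2
    rw [zero_add] at h1
    have h3 := (hP.1 _ h).2
    have h4 := hp.2.2.2.1
    obtain ⟨h5, -⟩ := h1
    obtain ⟨-, h6⟩ := h2
    omega

/-- The lattice points of the face are exactly the indicators of nested matchings. -/
lemma mem_face_iff {n k : ℕ} {A : Set (ℕ × ℕ)} (hA : AdmissibleA n A) (hfin : A.Finite)
    (s : ℕ × ℕ → ℕ) :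
    s ∈ SFaceFund n k A ↔ ∃ P, IsMatch k A P ∧ IsNested P ∧ s = ind P := by
  constructor
  · intro hs
    set P := hfin.toFinset.filter (fun r => s r ≠ 0) with hPdef
    have hmem : ∀ r, r ∈ P ↔ s r ≠ 0 := by
      intro r
      simp only [hPdef, Finset.mem_filter, Set.Finite.mem_toFinset]
      exact ⟨fun h => h.2, fun h => ⟨by_contra fun hc => h (hs.1 r hc), h⟩⟩
    have hPA : ∀ r ∈ P, r ∈ A := fun r hr => by
      simp only [hPdef, Finset.mem_filter, Set.Finite.mem_toFinset] at hr
      exact hr.1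
    have hst : ∀ r ∈ P, (r.1 ≤ k ∧ k ≤ r.2) ∧ s r = 1 := by
      intro r hr
      have h1 := face_single hs (hA.1 r (hPA r hr))
      have h2 := (hmem r).1 hr
      split_ifs at h1 with h3
      · exact ⟨h3, by omega⟩
      · omega
    have hpair : ∀ r ∈ P, ∀ q ∈ P, r ≠ q → ¬ GeA r q := by
      intro r hr q hq hne hge
      have := face_pair hs (hA.1 r (hPA r hr)) (hA.1 q (hPA q hq)) hne hge
      have h1 := (hst r hr).2
      have h2 := (hst q hq).2
      omega
    have hN : IsNested P := by
      intro r hr q hq hne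
      have h1 := hpair r hr q hq hne
      have h2 := hpair q hq r hr hne.symm
      simp only [GeA] at h1 h2
      omega
    refine ⟨P, ⟨fun r hr => ⟨hPA r hr, (hst r hr).1⟩, fun r hr q hq hne => ?_⟩, hN, ?_⟩
    · have := hN r hr q hq hne
      omega
    · funext r
      by_cases hr : r ∈ P
      · rw [ind, if_pos hr, (hst r hr).2]
      · rw [ind, if_neg hr]
        exact not_not.1 fun h => hr ((hmem r).2 h)
  · rintro ⟨P, hP, hN, rfl⟩
    exact ind_mem_face hP hN

/-- A monomial is a composition of root vectors of `A`. -/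
lemma applyMono_mem {k : ℕ} {A : Set (ℕ × ℕ)} (L : List (ℕ × ℕ)) (hL : ∀ r ∈ L, r ∈ A)
    (s : ℕ × ℕ → ℕ) :
    ∃ M : List (ℕ × ℕ), (∀ r ∈ M, r ∈ A) ∧
      applyMono L s (hwVec k) = M.foldr (fun r w => fRoot r w) (hwVec k) := by
  induction L with
  | nil => exact ⟨[], by simp, rfl⟩
  | cons r L ih =>
    obtain ⟨M, hM, h⟩ := ih fun q hq => hL q (List.mem_cons_of_mem _ hq)
    have hstep : applyMono (r :: L) s (hwVec k) =
        (fRoot r)^[s r] (applyMono L s (hwVec k)) := rfl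
    rw [hstep, h]
    generalize s r = m
    induction m with
    | zero => exact ⟨M, hM, rfl⟩
    | succ m ihm =>
      obtain ⟨M', hM', h'⟩ := ihm
      refine ⟨r :: M', ?_, by rw [Function.iterate_succ_apply', h', List.foldr_cons]⟩
      intro q hq
      rcases List.mem_cons.1 hq with rfl | hq
      · exact hL _ List.mem_cons_self
      · exact hM' q hq

lemma linearIndependent_eVec : LinearIndependent ℂ eVec :=
  Pi.linearIndependent_single_one (Finset ℕ) ℂ

/-- Let `A ⊆ R⁻(A_n)` be FFLV-admissible, `1 ≤ k ≤ n`, and fix a total order on `A`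
(a duplicate-free list `L` enumerating `A`).  Then the family of vectors
`(∏_{−α_{a,b} ∈ A} f_{a,b}^{s_{a,b}})(v_{ω_k})`, `s ∈ S_A(ω_k)` (factors in the fixed
order), is a ℂ-basis of `V_A(ω_k)`: it is linearly independent and spans `V_A(ω_k)`. -/
theorem stmt17 (n k : ℕ) (hn : 1 ≤ n) (hk1 : 1 ≤ k) (hk : k ≤ n)
    (A : Set (ℕ × ℕ)) (hA : AdmissibleA n A)
    (L : List (ℕ × ℕ)) (hnd : L.Nodup) (hL : ∀ r, r ∈ L ↔ r ∈ A) :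
    LinearIndependent ℂ (fun s : SFaceFund n k A => applyMono L s.1 (hwVec k)) ∧
    Submodule.span ℂ (Set.range (fun s : SFaceFund n k A => applyMono L s.1 (hwVec k))) =
      VA k A := by
  have hfin : A.Finite := L.finite_toSet.subset fun r hr => (hL r).2 hr
  have hA1 : ∀ r ∈ A, 1 ≤ r.1 := fun r hr => (hA.1 r hr).1
  constructor
  · choose P hP hN hs using fun s : SFaceFund n k A => (mem_face_iff hA hfin s.1).1 s.2
    choose c hc h using fun s : SFaceFund n k A => applyMono_eq hA (hP s) L hnd hL
    have hinj : Function.Injective fun s : SFaceFund n k A => target k (P s) := by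
      intro s t hst
      have := nested_unique hA1 (hP s) (hN s) (hP t) (hN t) hst
      exact Subtype.ext (by rw [hs s, hs t, this])
    have := (linearIndependent_eVec.comp _ hinj).units_smul fun s => Units.mk0 (c s) (hc s)
    convert this using 1
    funext s
    rw [hs s, h s]
    rfl
  · apply le_antisymm
    · rw [Submodule.span_le]
      rintro _ ⟨s, rfl⟩
      exact Submodule.subset_span (applyMono_mem L (fun r hr => (hL r).1 hr) s.1)
    · rw [VA, Submodule.span_le]
      rintro _ ⟨M, hM, rfl⟩
      obtain ⟨c, P, hP, h⟩ := foldr_fRoot (k := k) hA M hM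
      obtain ⟨Q, hQ, hQN, hQT⟩ := exists_nested hA _ P hP rfl
      obtain ⟨c', hc', h'⟩ := applyMono_eq hA hQ L hnd hL
      rw [h, ← hQT]
      have e : eVec (target k Q) = c'⁻¹ • applyMono L (ind Q) (hwVec k) := by
        rw [h', smul_smul, inv_mul_cancel₀ hc', one_smul]
      rw [e]
      exact Submodule.smul_mem _ _ (Submodule.smul_mem _ _
        (Submodule.subset_span ⟨⟨ind Q, ind_mem_face hQ hQN⟩, rfl⟩))
end

section
/- Let n ≥ 1 and let A ⊆ R⁻(A_n) be a subset that is closed under sums (α, β ∈ A with α + β ∈ R⁻ implies α + β ∈ A) but is NOT FFLV-admissible. Then there exists k ∈ {1, …, n} such that, for any fixed total order on A, the set of vectors { (∏_{−α_{a,b} ∈ A} f_{a,b}^{s_{a,b}})(v_{ω_k}) : s ∈ S_A(ω_k) } in Λ^k(ℂ^{n+1}) does not span V_A(ω_k) := span_ℂ{ f_{a₁,b₁} ∘ ⋯ ∘ f_{a_r,b_r}(v_{ω_k}) : r ≥ 0, each −α_{a_t,b_t} ∈ A }; in particular it is not a basis of V_A(ω_k). -/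
/-!
A sum-closed `A` that is not admissible contains `−α_{i₁,i₂}` and `−α_{j₁,j₂}` with
`i₁ < j₁ ≤ i₂ < j₂` such that `−α_{i₁,j₂} ∉ A` or `−α_{j₁,i₂} ∉ A`; the case `j₁ = i₂ + 1` is
excluded by closure under sums.  Take `k = j₁` and let
`S = ([1,k] \ {i₁, j₁}) ∪ {i₂ + 1, j₂ + 1}`.  Then `f_{i₁,i₂} f_{j₁,j₂} v_{ω_k} = ± e_S` lies in
`V_A(ω_k)`.

On the other hand the support of any `s ∈ S_A(ω_k)` consists of roots `−α_{a,b}` with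
`a ≤ k ≤ b` which are pairwise incomparable for `≽` (`SFaceFund.mem_interval`,
`SFaceFund.incomparable`).  If the monomial of `s` had a nonzero coefficient at `e_S`, then each
of `i₁, j₁` would be the first index of a root in the support whose second index is `i₂` or `j₂`
(`Covered`, `covered_applyMono`), and incomparability forces these roots to be `−α_{i₁,j₂}` and
`−α_{j₁,i₂}`, which are not both in `A`.  So the coordinate at `S` vanishes on the span of the
monomials but not on `V_A(ω_k)`.
-/

/-- A root occurring in a point of `S_A(ω_k)` involves the simple root `α_k`: otherwise the Dyck
path `−α_{a,a}, −α_{a,b}, −α_{b,b}` forces its exponent to vanish. -/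
lemma SFaceFund.mem_interval {n k : ℕ} {A : Set (ℕ × ℕ)} (hsub : ∀ r ∈ A, InRnegA n r)
    {s : ℕ × ℕ → ℕ} (hs : s ∈ SFaceFund n k A) {a b : ℕ} (h : s (a, b) ≠ 0) :
    (a, b) ∈ A ∧ a ≤ k ∧ k ≤ b := by
  obtain ⟨hs1, hs2⟩ := hs
  have hA : (a, b) ∈ A := by
    by_contra hc
    exact h (hs1 _ hc)
  obtain ⟨h1, h2, h3⟩ := hsub _ hA
  simp only at h1 h2 h3
  refine ⟨hA, ?_⟩
  by_contra hc
  -- Consecutive roots of a path must differ, so the case `a = b` uses a path of length one.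
  rcases h2.eq_or_lt with rfl | hlt
  · have := hs2 1 (fun _ => (a, a)) (by simp [IsDyckA, InRnegA, h1, h3])
    simp [hc] at this
    exact h this
  · have := hs2 3 (fun t => if t = 0 then (a, a) else if t = 1 then (a, b) else (b, b)) (by
      refine ⟨by norm_num, ?_, by simp, by simp, ?_⟩
      · intro t ht
        interval_cases t <;> simp [InRnegA] <;> omega
      · intro t ht
        have : t < 2 := by omega
        interval_cases t <;> simp [GeA] <;> omega)
    simp [hc, Finset.sum_range_succ] at this
    exact h this.1.2

/-- Two distinct comparable roots lie on a common Dyck path, so they do not both occur in a point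
of `S_A(ω_k)`; only roots with different first indices are needed. -/
lemma SFaceFund.incomparable {n k : ℕ} {A : Set (ℕ × ℕ)} (hsub : ∀ r ∈ A, InRnegA n r)
    {s : ℕ × ℕ → ℕ} (hs : s ∈ SFaceFund n k A) {a b a' b' : ℕ} (h : s (a, b) ≠ 0)
    (h' : s (a', b') ≠ 0) (haa : a < a') : b' < b := by
  obtain ⟨hA, hak, hkb⟩ := SFaceFund.mem_interval hsub hs h
  obtain ⟨hA', hak', hkb'⟩ := SFaceFund.mem_interval hsub hs h'
  obtain ⟨h1, h2, h3⟩ := hsub _ hA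
  obtain ⟨h1', h2', h3'⟩ := hsub _ hA'
  simp only at h1 h2 h3 h1' h2' h3'
  by_contra hc
  push Not at hc
  obtain ⟨-, hs2⟩ := hs
  rcases h2'.eq_or_lt with rfl | hlt
  · have := hs2 3 (fun t => if t = 0 then (a, a) else if t = 1 then (a, b) else (a', a')) (by
      refine ⟨by norm_num, ?_, by simp, by simp, ?_⟩
      · intro t ht
        interval_cases t <;> simp [InRnegA] <;> omega
      · intro t ht
        have : t < 2 := by omega
        interval_cases t <;> simp [GeA] <;> omega)
    simp [Finset.sum_range_succ] at this
    split_ifs at this <;> omega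
  · have := hs2 4 (fun t => if t = 0 then (a, a) else if t = 1 then (a, b) else
        if t = 2 then (a', b') else (b', b')) (by
      refine ⟨by norm_num, ?_, by simp, by simp, ?_⟩
      · intro t ht
        interval_cases t <;> simp [InRnegA] <;> omega
      · intro t ht
        have : t < 3 := by omega
        interval_cases t <;> simp [GeA] <;> omega)
    simp [Finset.sum_range_succ] at this
    split_ifs at this <;> omega

/-- Every basis vector `e_T` occurring in `x` has the property that each letter `a ≤ k` missing
from `T` is the first index of some root `−α_{a,b}` with `s_{a,b} ≠ 0` and `b + 1 ∈ T`. -/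
def Covered (k : ℕ) (s : ℕ × ℕ → ℕ) (x : Finset ℕ → ℂ) : Prop :=
  ∀ T, x T ≠ 0 → ∀ a, 1 ≤ a → a ≤ k → a ∉ T → ∃ b, s (a, b) ≠ 0 ∧ b + 1 ∈ T

/-- Applying `f_{a,b}` exchanges a letter `a ≤ k` for a letter `b + 1 > k`, so witnesses for the
other missing letters, which all exceed `k`, remain. -/
lemma Covered.fRoot {k : ℕ} {s : ℕ × ℕ → ℕ} (hs : ∀ a b, s (a, b) ≠ 0 → a ≤ k ∧ k ≤ b)
    {x : Finset ℕ → ℂ} (hx : Covered k s x) {r : ℕ × ℕ} (hr : s r ≠ 0) :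
    Covered k s (fRoot r x) := by
  obtain ⟨c, d⟩ := r
  obtain ⟨hc, hd⟩ := hs _ _ hr
  intro T hT a ha1 hak haT
  have hne : d + 1 ≠ c := by omega
  simp only [_root_.fRoot, matE, hne, if_false] at hT
  split_ifs at hT with hcond
  · have hx' := right_ne_zero_of_mul hT
    by_cases hac : a = c
    · subst hac
      exact ⟨d, hr, hcond.1⟩
    · obtain ⟨b, hb, hbT⟩ := hx _ hx' a ha1 hak (by simp [hac, haT])
      have hkb := (hs _ _ hb).2
      refine ⟨b, hb, ?_⟩
      simp only [Finset.mem_insert, Finset.mem_erase] at hbT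
      rcases hbT with hbT | hbT
      · omega
      · exact hbT.2
  · exact absurd rfl hT

lemma covered_applyMono {k : ℕ} {s : ℕ × ℕ → ℕ} (hs : ∀ a b, s (a, b) ≠ 0 → a ≤ k ∧ k ≤ b)
    (L : List (ℕ × ℕ)) : Covered k s (applyMono L s (hwVec k)) := by
  induction L with
  | nil =>
    intro T hT a ha1 hak haT
    have : T = Finset.Icc 1 k := by
      by_contra hc
      exact hT (by simp [applyMono, hwVec, hc])
    subst this
    exact absurd (Finset.mem_Icc.2 ⟨ha1, hak⟩) haT
  | cons r L ih =>
    have key : ∀ m ≤ s r, Covered k s ((fRoot r)^[m] (applyMono L s (hwVec k))) := by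
      intro m
      induction m with
      | zero => exact fun _ => ih
      | succ m ihm =>
        intro hm
        rw [Function.iterate_succ_apply']
        exact (ihm (by omega)).fRoot hs (by omega)
    exact key _ le_rfl

/-- If `p ∈ T` and `q ∉ T`, the coefficient of `E_{p,q} x` at `e_T` is, up to sign, that of `x` at
the basis vector with `p` replaced by `q`. -/
lemma matE_apply_ne_zero {p q : ℕ} {x : Finset ℕ → ℂ} {T : Finset ℕ} (hp : p ∈ T) (hq : q ∉ T)
    (hx : x (insert q (T.erase p)) ≠ 0) : matE p q x T ≠ 0 := by
  have hne : p ≠ q := by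
    rintro rfl
    exact hq hp
  simp only [matE, hne, if_false, hp, hq, not_false_eq_true, and_self, if_true]
  exact mul_ne_zero (pow_ne_zero _ (by norm_num)) hx

/-- Let `A ⊆ R⁻(A_n)` be closed under sums inside `R⁻` but NOT FFLV-admissible.  Then
there is a `k ∈ {1, …, n}` such that for any fixed total order on `A` (any
duplicate-free list `L` enumerating `A`), the set of vectors
`(∏_{−α_{a,b} ∈ A} f_{a,b}^{s_{a,b}})(v_{ω_k})`, `s ∈ S_A(ω_k)` (factors in the fixed
order), does not span `V_A(ω_k)`; in particular it is not a basis of `V_A(ω_k)`. -/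
theorem stmt18 (n : ℕ) (hn : 1 ≤ n) (A : Set (ℕ × ℕ))
    (hsub : ∀ r ∈ A, InRnegA n r)
    (hsums : ∀ r ∈ A, ∀ s ∈ A, r.2 + 1 = s.1 → (r.1, s.2) ∈ A)
    (hnotadm : ¬ AdmissibleA n A) :
    ∃ k, 1 ≤ k ∧ k ≤ n ∧
      ∀ L : List (ℕ × ℕ), L.Nodup → (∀ r, r ∈ L ↔ r ∈ A) →
        Submodule.span ℂ (Set.range (fun s : SFaceFund n k A => applyMono L s.1 (hwVec k)))
          ≠ VA k A := by
  -- A violation of admissibility: two overlapping roots with a missing join component.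
  obtain ⟨i₁, i₂, j₁, j₂, hi, hj, hlt1, hlt2, hlt3, hmiss⟩ : ∃ i₁ i₂ j₁ j₂, (i₁, i₂) ∈ A ∧
      (j₁, j₂) ∈ A ∧ i₁ < j₁ ∧ j₁ ≤ i₂ ∧ i₂ < j₂ ∧ ¬((i₁, j₂) ∈ A ∧ (j₁, i₂) ∈ A) := by
    by_contra hc
    push Not at hc
    refine hnotadm ⟨hsub, hsums, ?_⟩
    rintro ⟨i₁, i₂⟩ hi ⟨j₁, j₂⟩ hj - r ⟨⟨h1, h2, h3⟩, hr⟩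
    simp only at h1 h2 h3 hr
    by_cases hle : j₁ ≤ i₂
    · have := hc i₁ i₂ j₁ j₂ hi hj h1 hle h3
      rcases hr with rfl | ⟨-, rfl⟩
      · exact this.1
      · exact this.2
    · rcases hr with rfl | ⟨h, -⟩
      · exact hsums _ hi _ hj (by simp only; omega)
      · exact absurd h hle
  have hi' := hsub _ hi
  have hj' := hsub _ hj
  simp only [InRnegA] at hi' hj'
  refine ⟨j₁, by omega, by omega, fun L _ _ heq => ?_⟩
  set S : Finset ℕ := (Finset.Icc 1 j₁ \ {i₁, j₁}) ∪ {i₂ + 1, j₂ + 1} with hS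
  have hmemS : ∀ x, x ∈ S ↔ ((1 ≤ x ∧ x ≤ j₁) ∧ x ≠ i₁ ∧ x ≠ j₁) ∨ x = i₂ + 1 ∨ x = j₂ + 1 := by
    intro x
    simp only [hS, Finset.mem_union, Finset.mem_sdiff, Finset.mem_Icc, Finset.mem_insert,
      Finset.mem_singleton]
    tauto
  have hmem : fRoot (i₁, i₂) (fRoot (j₁, j₂) (hwVec j₁)) ∈ VA j₁ A :=
    Submodule.subset_span ⟨[(i₁, i₂), (j₁, j₂)], by simp [hi, hj], rfl⟩
  have hne : fRoot (i₁, i₂) (fRoot (j₁, j₂) (hwVec j₁)) S ≠ 0 := by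
    refine matE_apply_ne_zero ((hmemS _).2 (by simp)) (by rw [hmemS]; simp only; omega) ?_
    refine matE_apply_ne_zero ?_ ?_ ?_
    · exact Finset.mem_insert_of_mem
        (Finset.mem_erase.2 ⟨by simp only; omega, (hmemS _).2 (by simp)⟩)
    · simp only [Finset.mem_insert, Finset.mem_erase, hmemS]
      omega
    · have : insert j₁ ((insert i₁ (S.erase (i₂ + 1))).erase (j₂ + 1)) = Finset.Icc 1 j₁ := by
        ext x
        simp only [Finset.mem_insert, Finset.mem_erase, hmemS, Finset.mem_Icc]
        omega
      simp [hwVec, this]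
  have hzero : Submodule.span ℂ
      (Set.range (fun s : SFaceFund n j₁ A => applyMono L s.1 (hwVec j₁))) ≤
      LinearMap.ker (LinearMap.proj (R := ℂ) (φ := fun _ : Finset ℕ => ℂ) S) := by
    rw [Submodule.span_le]
    rintro _ ⟨⟨s, hs⟩, rfl⟩
    simp only [SetLike.mem_coe, LinearMap.mem_ker, LinearMap.proj_apply]
    by_contra hc
    have hint : ∀ a b, s (a, b) ≠ 0 → a ≤ j₁ ∧ j₁ ≤ b :=
      fun a b h => (SFaceFund.mem_interval hsub hs h).2
    have hcov := covered_applyMono hint L S hc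
    obtain ⟨b, hb, hbS⟩ := hcov i₁ (by omega) (by omega) (by rw [hmemS]; omega)
    obtain ⟨c, hcs, hcS⟩ := hcov j₁ (by omega) le_rfl (by rw [hmemS]; omega)
    have hbk := hint _ _ hb
    have hck := hint _ _ hcs
    have hcb := SFaceFund.incomparable hsub hs hb hcs hlt1
    rw [hmemS] at hbS hcS
    obtain rfl : b = j₂ := by omega
    obtain rfl : c = i₂ := by omega
    exact hmiss ⟨(SFaceFund.mem_interval hsub hs hb).1, (SFaceFund.mem_interval hsub hs hcs).1⟩
  exact hne (LinearMap.mem_ker.1 (hzero (heq ▸ hmem)))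
end
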